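/- arXiv:2211.03904 — 4 statements merged into one kernel-verified Lean document; each statement's English description precedes it below -/
import Mathlib

section
/- The generalized x-translation with arbitrary time-dependent coefficient is a symmetry of the potential Kawahara–KP equation in linearized (characteristic) form: if v solves the potential Kawahara–KP equation, f : ℝ → ℝ is any smooth function, and p(t,x,y) := -f(t)·v_x(t,x,y) + x·f'(t) + (1/(2σ))·y²·f''(t), then p satisfies the linearized equation p_tx + v_xx·p_x + v_x·p_xx + β·p_xxxx + p_xxxxxx - σ·p_yy = 0 at every point of ℝ³. -/
/-- Partial derivative in `t` of a function `v (t, x, y)` given in curried form. -/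
noncomputable def pt (v : ℝ → ℝ → ℝ → ℝ) : ℝ → ℝ → ℝ → ℝ :=
  fun t x y => deriv (fun s => v s x y) t

/-- Partial derivative in `x` of a function `v (t, x, y)` given in curried form. -/
noncomputable def px (v : ℝ → ℝ → ℝ → ℝ) : ℝ → ℝ → ℝ → ℝ :=
  fun t x y => deriv (fun s => v t s y) x

/-- Partial derivative in `y` of a function `v (t, x, y)` given in curried form. -/
noncomputable def py (v : ℝ → ℝ → ℝ → ℝ) : ℝ → ℝ → ℝ → ℝ :=
  fun t x y => deriv (fun s => v t x s) y

/-- The potential Kawahara–KP operator: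
`v_tx + v_x·v_xx + β·v_xxxx + v_xxxxxx - σ·v_yy`. -/
noncomputable def KKP (β σ : ℝ) (v : ℝ → ℝ → ℝ → ℝ) : ℝ → ℝ → ℝ → ℝ :=
  fun t x y =>
    px (pt v) t x y + px v t x y * px (px v) t x y
      + β * px (px (px (px v))) t x y
      + px (px (px (px (px (px v))))) t x y
      - σ * py (py v) t x y

/-- The linearization of the potential Kawahara–KP equation at `v`, applied to `p`:
`p_tx + v_xx·p_x + v_x·p_xx + β·p_xxxx + p_xxxxxx - σ·p_yy`. -/
noncomputable def KKPlin (β σ : ℝ) (v p : ℝ → ℝ → ℝ → ℝ) : ℝ → ℝ → ℝ → ℝ :=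
  fun t x y =>
    px (pt p) t x y + px (px v) t x y * px p t x y + px v t x y * px (px p) t x y
      + β * px (px (px (px p))) t x y
      + px (px (px (px (px (px p))))) t x y
      - σ * py (py p) t x y

/-!
Differentiating the equation in `x` shows that `v_x` is annihilated by the linearization at a
solution `v`. The factor `-f(t)` spoils this only through the `t`-derivative in `∂ₓ∂ₜ`, which leaves
the defect `-f' v_xx`. The summand `x f'` contributes `f' v_xx + f''`, and the coefficient of `y²`
is chosen so that `-σ ∂_y²` removes the remaining `f''`.
-/

section PartialDerivatives

theorem fderiv_fderiv_apply_comm {E F : Type*} [NormedAddCommGroup E] [NormedSpace ℝ E]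
    [NormedAddCommGroup F] [NormedSpace ℝ F] {φ : E → F} {q : E}
    (hφ : ContDiffAt ℝ 2 φ q) (a b : E) :
    fderiv ℝ (fun r => fderiv ℝ φ r a) q b = fderiv ℝ (fun r => fderiv ℝ φ r b) q a := by
  have fderiv_apply (c d : E) :
      fderiv ℝ (fun r => fderiv ℝ φ r c) q d = fderiv ℝ (fderiv ℝ φ) q d c := by
    have hφ' : DifferentiableAt ℝ (fderiv ℝ φ) q :=
      (hφ.fderiv_right (m := 1) (by norm_num)).differentiableAt one_ne_zero
    simp [fderiv_clm_apply hφ' (differentiableAt_const c)]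
  rw [fderiv_apply, fderiv_apply]
  exact (hφ.isSymmSndFDerivAt (by simp)).eq b a

variable {v : ℝ → ℝ → ℝ → ℝ}

theorem hasDerivAt_pt (hv : Differentiable ℝ ↿v) (t x y : ℝ) :
    HasDerivAt (fun s => v s x y) (pt v t x y) t :=
  (hv.comp (f := fun s : ℝ => (s, x, y)) (by fun_prop) t).hasDerivAt

theorem hasDerivAt_px (hv : Differentiable ℝ ↿v) (t x y : ℝ) :
    HasDerivAt (fun s => v t s y) (px v t x y) x :=
  (hv.comp (f := fun s : ℝ => (t, s, y)) (by fun_prop) x).hasDerivAt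

theorem hasDerivAt_py (hv : Differentiable ℝ ↿v) (t x y : ℝ) :
    HasDerivAt (fun s => v t x s) (py v t x y) y :=
  (hv.comp (f := fun s : ℝ => (t, x, s)) (by fun_prop) y).hasDerivAt

theorem uncurry_pt (hv : Differentiable ℝ ↿v) :
    ↿(pt v) = fun q => fderiv ℝ ↿v q (1, 0, 0) := by
  funext ⟨t, x, y⟩
  exact ((hv (t, x, y)).hasFDerivAt.comp_hasDerivAt (f := fun s : ℝ => (s, x, y)) t
    ((hasDerivAt_id t).prodMk (hasDerivAt_const t (x, y)))).deriv

theorem uncurry_px (hv : Differentiable ℝ ↿v) :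
    ↿(px v) = fun q => fderiv ℝ ↿v q (0, 1, 0) := by
  funext ⟨t, x, y⟩
  exact ((hv (t, x, y)).hasFDerivAt.comp_hasDerivAt (f := fun s : ℝ => (t, s, y)) x
    ((hasDerivAt_const x t).prodMk ((hasDerivAt_id x).prodMk (hasDerivAt_const x y)))).deriv

theorem uncurry_py (hv : Differentiable ℝ ↿v) :
    ↿(py v) = fun q => fderiv ℝ ↿v q (0, 0, 1) := by
  funext ⟨t, x, y⟩
  exact ((hv (t, x, y)).hasFDerivAt.comp_hasDerivAt (f := fun s : ℝ => (t, x, s)) y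
    ((hasDerivAt_const y t).prodMk ((hasDerivAt_const y x).prodMk (hasDerivAt_id y)))).deriv

variable {m n : WithTop ℕ∞}

theorem contDiff_pt (hv : ContDiff ℝ n ↿v) (hmn : m + 1 ≤ n) : ContDiff ℝ m ↿(pt v) := by
  rw [uncurry_pt ((hv.of_le (le_add_self.trans hmn)).differentiable one_ne_zero)]
  exact (hv.fderiv_right hmn).clm_apply contDiff_const

theorem contDiff_px (hv : ContDiff ℝ n ↿v) (hmn : m + 1 ≤ n) : ContDiff ℝ m ↿(px v) := by
  rw [uncurry_px ((hv.of_le (le_add_self.trans hmn)).differentiable one_ne_zero)]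
  exact (hv.fderiv_right hmn).clm_apply contDiff_const

theorem contDiff_py (hv : ContDiff ℝ n ↿v) (hmn : m + 1 ≤ n) : ContDiff ℝ m ↿(py v) := by
  rw [uncurry_py ((hv.of_le (le_add_self.trans hmn)).differentiable one_ne_zero)]
  exact (hv.fderiv_right hmn).clm_apply contDiff_const

theorem contDiff_px_iterate (k : ℕ) (hv : ContDiff ℝ (m + k) ↿v) :
    ContDiff ℝ m ↿(px^[k] v) := by
  induction k generalizing v with
  | zero => simpa using hv
  | succ k ih => exact ih (contDiff_px hv (by push_cast; rw [add_assoc]))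

theorem pt_px_comm (hv : ContDiff ℝ 2 ↿v) : pt (px v) = px (pt v) := by
  have hv₁ : Differentiable ℝ ↿v := hv.differentiable two_ne_zero
  have hpt : Differentiable ℝ ↿(pt v) :=
    (contDiff_pt (m := 1) hv (by norm_num)).differentiable one_ne_zero
  have hpx : Differentiable ℝ ↿(px v) :=
    (contDiff_px (m := 1) hv (by norm_num)).differentiable one_ne_zero
  funext t x y
  calc pt (px v) t x y
      = fderiv ℝ (fun q => fderiv ℝ ↿v q (0, 1, 0)) (t, x, y) (1, 0, 0) := by
        rw [← uncurry_px hv₁]; exact congrFun (uncurry_pt hpx) (t, x, y)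
    _ = fderiv ℝ (fun q => fderiv ℝ ↿v q (1, 0, 0)) (t, x, y) (0, 1, 0) :=
        fderiv_fderiv_apply_comm hv.contDiffAt _ _
    _ = px (pt v) t x y := by
        rw [← uncurry_pt hv₁]; exact (congrFun (uncurry_px hpt) (t, x, y)).symm

theorem py_px_comm (hv : ContDiff ℝ 2 ↿v) : py (px v) = px (py v) := by
  have hv₁ : Differentiable ℝ ↿v := hv.differentiable two_ne_zero
  have hpy : Differentiable ℝ ↿(py v) :=
    (contDiff_py (m := 1) hv (by norm_num)).differentiable one_ne_zero
  have hpx : Differentiable ℝ ↿(px v) :=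
    (contDiff_px (m := 1) hv (by norm_num)).differentiable one_ne_zero
  funext t x y
  calc py (px v) t x y
      = fderiv ℝ (fun q => fderiv ℝ ↿v q (0, 1, 0)) (t, x, y) (0, 0, 1) := by
        rw [← uncurry_px hv₁]; exact congrFun (uncurry_py hpx) (t, x, y)
    _ = fderiv ℝ (fun q => fderiv ℝ ↿v q (0, 0, 1)) (t, x, y) (0, 1, 0) :=
        fderiv_fderiv_apply_comm hv.contDiffAt _ _
    _ = px (py v) t x y := by
        rw [← uncurry_py hv₁]; exact (congrFun (uncurry_px hpy) (t, x, y)).symm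

end PartialDerivatives

theorem px_KKP (β σ : ℝ) {v : ℝ → ℝ → ℝ → ℝ} (hv : ContDiff ℝ 7 ↿v) :
    px (KKP β σ v) = KKPlin β σ v (px v) := by
  have hpx (k : ℕ) (hk : 1 + (k : WithTop ℕ∞) ≤ 7) : Differentiable ℝ ↿(px^[k] v) :=
    (contDiff_px_iterate k (hv.of_le hk)).differentiable one_ne_zero
  have hpt : ContDiff ℝ 2 ↿(pt v) := contDiff_pt hv (by norm_num)
  have hpy : ContDiff ℝ 2 ↿(py v) := contDiff_py hv (by norm_num)
  have hpxpt : Differentiable ℝ ↿(px (pt v)) :=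
    (contDiff_px (m := 1) hpt (by norm_num)).differentiable one_ne_zero
  have hpypy : Differentiable ℝ ↿(py (py v)) :=
    (contDiff_py (m := 1) hpy (by norm_num)).differentiable one_ne_zero
  have hv₂ : ContDiff ℝ 2 ↿v := hv.of_le (by norm_num)
  have hpypypx : py (py (px v)) = px (py (py v)) := by
    rw [py_px_comm hv₂, py_px_comm hpy]
  funext t x y
  have hderiv := ((((hasDerivAt_px hpxpt t x y).add
    ((hasDerivAt_px (hpx 1 (by norm_num)) t x y).mul
      (hasDerivAt_px (hpx 2 (by norm_num)) t x y))).add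
    ((hasDerivAt_px (hpx 4 (by norm_num)) t x y).const_mul β)).add
    (hasDerivAt_px (hpx 6 (by norm_num)) t x y)).sub
    ((hasDerivAt_px hpypy t x y).const_mul σ)
  refine hderiv.deriv.trans ?_
  simp only [KKPlin, pt_px_comm hv₂, hpypypx, Function.iterate_succ, Function.iterate_zero,
    Function.comp_apply, id_eq]
  ring

/-- The ansatz `a(t) w + x b(t) + g(t, y)` for characteristics of symmetries: a time-modulated
profile `w` plus a term affine in `x`. -/
def modulatedAdd (a b : ℝ → ℝ) (g : ℝ → ℝ → ℝ) (w : ℝ → ℝ → ℝ → ℝ) : ℝ → ℝ → ℝ → ℝ :=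
  fun t x y => a t * w t x y + x * b t + g t y

section ModulatedAdd

variable {a b : ℝ → ℝ} {g : ℝ → ℝ → ℝ} {w : ℝ → ℝ → ℝ → ℝ}

theorem px_modulatedAdd (hw : Differentiable ℝ ↿w) :
    px (modulatedAdd a b g w) = fun t x y => a t * px w t x y + b t := by
  funext t x y
  exact ((((hasDerivAt_px hw t x y).const_mul (a t)).add
    ((hasDerivAt_id x).mul_const (b t))).add_const (g t y)).deriv.trans (by rw [one_mul])

theorem px_iterate_modulatedAdd (hw : Differentiable ℝ ↿w) (k : ℕ) :
    px^[k + 2] (modulatedAdd a b g w) = fun t x y => a t * px^[k + 2] w t x y := by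
  induction k with
  | zero =>
    change px (px (modulatedAdd a b g w)) = fun t x y => a t * px (px w) t x y
    rw [px_modulatedAdd hw]
    funext t x y
    exact (deriv_add_const (b t)).trans (deriv_const_mul_field (a t))
  | succ k ih =>
    rw [Function.iterate_succ_apply', Function.iterate_succ_apply' px (k + 2), ih]
    funext t x y
    exact deriv_const_mul_field (a t)

theorem px_pt_modulatedAdd (hw : ContDiff ℝ 2 ↿w) {t : ℝ} (ha : DifferentiableAt ℝ a t)
    (hb : DifferentiableAt ℝ b t) (hg : ∀ y, DifferentiableAt ℝ (fun s => g s y) t) (x y : ℝ) :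
    px (pt (modulatedAdd a b g w)) t x y =
      deriv a t * px w t x y + a t * px (pt w) t x y + deriv b t := by
  have hw₁ : Differentiable ℝ ↿w := hw.differentiable two_ne_zero
  have hptw : Differentiable ℝ ↿(pt w) :=
    (contDiff_pt (m := 1) hw (by norm_num)).differentiable one_ne_zero
  have hpt (s : ℝ) : pt (modulatedAdd a b g w) t s y =
      deriv a t * w t s y + a t * pt w t s y + s * deriv b t + deriv (fun r => g r y) t :=
    (((ha.hasDerivAt.mul (hasDerivAt_pt hw₁ t s y)).add
      (hb.hasDerivAt.const_mul s)).add (hg y).hasDerivAt).deriv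
  rw [px, funext hpt]
  exact (((((hasDerivAt_px hw₁ t x y).const_mul (deriv a t)).add
    ((hasDerivAt_px hptw t x y).const_mul (a t))).add
    ((hasDerivAt_id x).mul_const (deriv b t))).add_const (deriv (fun r => g r y) t)).deriv.trans
      (by rw [one_mul])

theorem py_py_modulatedAdd (hw : ContDiff ℝ 2 ↿w) {t : ℝ} (hg : ContDiff ℝ 2 (g t))
    (x y : ℝ) :
    py (py (modulatedAdd a b g w)) t x y =
      a t * py (py w) t x y + deriv (deriv (g t)) y := by
  have hw₁ : Differentiable ℝ ↿w := hw.differentiable two_ne_zero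
  have hpyw : Differentiable ℝ ↿(py w) :=
    (contDiff_py (m := 1) hw (by norm_num)).differentiable one_ne_zero
  have hpy (s : ℝ) : py (modulatedAdd a b g w) t x s = a t * py w t x s + deriv (g t) s :=
    ((((hasDerivAt_py hw₁ t x s).const_mul (a t)).add_const (x * b t)).add
      (hg.differentiable two_ne_zero s).hasDerivAt).deriv
  rw [py, funext hpy]
  exact (((hasDerivAt_py hpyw t x y).const_mul (a t)).add
    (hg.differentiable_deriv_two y).hasDerivAt).deriv

theorem KKPlin_modulatedAdd (β σ : ℝ) (v : ℝ → ℝ → ℝ → ℝ) (hw : ContDiff ℝ 2 ↿w)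
    {t : ℝ} (ha : DifferentiableAt ℝ a t) (hb : DifferentiableAt ℝ b t)
    (hgt : ∀ y, DifferentiableAt ℝ (fun s => g s y) t) (hgy : ContDiff ℝ 2 (g t)) (x y : ℝ) :
    KKPlin β σ v (modulatedAdd a b g w) t x y =
      a t * KKPlin β σ v w t x y + deriv a t * px w t x y + deriv b t
        + b t * px (px v) t x y - σ * deriv (deriv (g t)) y := by
  have hw₁ : Differentiable ℝ ↿w := hw.differentiable two_ne_zero
  have hpx (k : ℕ) : px^[k + 2] (modulatedAdd a b g w) t x y = a t * px^[k + 2] w t x y := by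
    rw [px_iterate_modulatedAdd hw₁]
  have hpx₂ := hpx 0
  have hpx₄ := hpx 2
  have hpx₆ := hpx 4
  simp only [Function.iterate_succ, Function.iterate_zero, Function.comp_apply, id_eq]
    at hpx₂ hpx₄ hpx₆
  rw [KKPlin, KKPlin, px_pt_modulatedAdd hw ha hb hgt, py_py_modulatedAdd hw hgy, hpx₂, hpx₄, hpx₆,
    px_modulatedAdd hw₁]
  ring

end ModulatedAdd

theorem KKPlin_gen_x_translation_eq (β : ℝ) {σ : ℝ} (hσ : σ ≠ 0) {v : ℝ → ℝ → ℝ → ℝ}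
    (hv : ContDiff ℝ 7 ↿v) {f : ℝ → ℝ} (hf : ContDiff ℝ 3 f) (t x y : ℝ) :
    KKPlin β σ v
      (fun t x y => - f t * px v t x y + x * deriv f t
        + (1 / (2 * σ)) * y ^ 2 * deriv (deriv f) t) t x y = - f t * px (KKP β σ v) t x y := by
  have hf' : ContDiff ℝ 2 (deriv f) := hf.deriv'
  have hf₁ : Differentiable ℝ f := hf.differentiable three_ne_zero
  have hpx : ContDiff ℝ 2 ↿(px v) := contDiff_px hv (by norm_num)
  have hquadratic :
      deriv (deriv fun s => 1 / (2 * σ) * s ^ 2 * deriv (deriv f) t) y = deriv (deriv f) t / σ := by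
    simp only [deriv_mul_const_field', deriv_const_mul_field', deriv_pow_field, Nat.cast_ofNat,
      Nat.add_one_sub_one, pow_one, deriv_const_mul_id']
    field_simp
  have hansatz := KKPlin_modulatedAdd (a := fun t => - f t) (b := deriv f)
    (g := fun t y => (1 / (2 * σ)) * y ^ 2 * deriv (deriv f) t) β σ v hpx (hf₁ t).fun_neg
    (hf'.differentiable two_ne_zero t) (fun y => (hf'.differentiable_deriv_two t).const_mul _)
    (by fun_prop) x y
  refine hansatz.trans ?_
  rw [hquadratic, mul_div_cancel₀ _ hσ, deriv.fun_neg, px_KKP β σ hv]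
  ring

theorem gen_x_translation_symmetry_KKP_general (β : ℝ) {σ : ℝ} (hσ : σ ≠ 0)
    {v : ℝ → ℝ → ℝ → ℝ} (hv : ContDiff ℝ 7 ↿v) (hsol : ∀ t x y : ℝ, KKP β σ v t x y = 0)
    {f : ℝ → ℝ} (hf : ContDiff ℝ 3 f) (t x y : ℝ) :
    KKPlin β σ v
      (fun t x y => - f t * px v t x y + x * deriv f t
        + (1 / (2 * σ)) * y ^ 2 * deriv (deriv f) t) t x y = 0 := by
  rw [KKPlin_gen_x_translation_eq β hσ hv hf]
  simp [px, hsol]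

/-- The generalized x-translation with arbitrary time-dependent coefficient is a
symmetry of the potential Kawahara–KP equation in linearized (characteristic) form. -/
theorem gen_x_translation_symmetry_KKP (β σ : ℝ) (hβ : β ≠ 0) (hσ : σ = 1 ∨ σ = -1)
    (v : ℝ → ℝ → ℝ → ℝ)
    (hv : ContDiff ℝ (⊤ : ℕ∞) (fun q : ℝ × ℝ × ℝ => v q.1 q.2.1 q.2.2))
    (hsol : ∀ t x y : ℝ, KKP β σ v t x y = 0)
    (f : ℝ → ℝ) (hf : ContDiff ℝ (⊤ : ℕ∞) f) :
    ∀ t x y : ℝ,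
      KKPlin β σ v
        (fun t x y => - f t * px v t x y + x * deriv f t
          + (1 / (2 * σ)) * y ^ 2 * deriv (deriv f) t) t x y = 0 := by
  have hσ₀ : σ ≠ 0 := by rcases hσ with rfl | rfl <;> norm_num
  exact gen_x_translation_symmetry_KKP_general β hσ₀ (mod_cast contDiff_infty.1 hv 7) hsol
    (mod_cast contDiff_infty.1 hf 3)
end

section
/- Generalized x-momentum conservation law for the potential Kawahara–KP equation: if v solves the potential Kawahara–KP equation and f : ℝ → ℝ is any smooth function, then ∂_t T + ∂_x Φˣ + ∂_y Φʸ = 0 holds at every point of ℝ³, where T := (1/2)·v_x²·f(t) + v·f'(t), Φˣ := ((1/2)·σ·v_y² + β·v_x·v_xxx - (1/2)·β·v_xx² + (1/3)·v_x³ + v_xxxxx·v_x - v_xx·v_xxxx + (1/2)·v_xxx²)·f(t) - ( x·(β·v_xxx + v_xxxxx + (1/2)·v_x² + v_t) - (β·v_xx + v_xxxx) )·f'(t) - (1/(2σ))·y²·(β·v_xxx + v_xxxxx + (1/2)·v_x² + v_t)·f''(t), and Φʸ := -σ·f(t)·v_x·v_y + σ·x·f'(t)·v_y + ((1/2)·y²·v_y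 - y·v)·f''(t). -/
/-!
The conservation law is the solution-free identity
`∂_t T + ∂_x Φˣ + ∂_y Φʸ = Q · (v_tx + v_x v_xx + β v_xxxx + v_xxxxxx - σ v_yy)` with
characteristic `Q = f v_x - x f' - y² f'' / (2σ)`. The equation itself is a conservation law
`∂_x E - ∂_y (σ v_y) = 0`. Multiplying by `v_x` gives the x-momentum balance and multiplying by
`-x` and `-y² / (2σ)` gives two further balances, up to the source terms
`v_x² / 2 + v_t` and `v`. Weighted by `f'` and `f''`, these sources are exactly what `∂_t`
produces when it hits the weights in `T = f v_x² / 2 + f' v`.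
-/

section

variable {β σ : ℝ} {v : ℝ → ℝ → ℝ → ℝ} {f : ℝ → ℝ} {m n : WithTop ℕ∞}

/-- Joint `C^n` regularity of a function of `(t, x, y)` given in curried form. -/
def JointlyContDiff (n : WithTop ℕ∞) (v : ℝ → ℝ → ℝ → ℝ) : Prop :=
  ContDiff ℝ n (fun q : ℝ × ℝ × ℝ => v q.1 q.2.1 q.2.2)

/-- The derivative in the direction `e` of a function of `(t, x, y)` given in curried form; the
operators `pt`, `px`, `py` are the cases where `e` is a standard basis vector. -/
noncomputable def dirDeriv (e : ℝ × ℝ × ℝ) (v : ℝ → ℝ → ℝ → ℝ) : ℝ → ℝ → ℝ → ℝ :=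
  fun t x y => fderiv ℝ (fun q : ℝ × ℝ × ℝ => v q.1 q.2.1 q.2.2) (t, x, y) e

theorem hasDerivAt_mk_t (t x y : ℝ) :
    HasDerivAt (fun s : ℝ => (s, x, y)) ((1, 0, 0) : ℝ × ℝ × ℝ) t :=
  (hasDerivAt_id t).prodMk (hasDerivAt_const t (x, y))

theorem hasDerivAt_mk_x (t x y : ℝ) :
    HasDerivAt (fun s : ℝ => (t, s, y)) ((0, 1, 0) : ℝ × ℝ × ℝ) x :=
  (hasDerivAt_const x t).prodMk ((hasDerivAt_id x).prodMk (hasDerivAt_const x y))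

theorem hasDerivAt_mk_y (t x y : ℝ) :
    HasDerivAt (fun s : ℝ => (t, x, s)) ((0, 0, 1) : ℝ × ℝ × ℝ) y :=
  (hasDerivAt_const y t).prodMk ((hasDerivAt_const y x).prodMk (hasDerivAt_id y))

theorem ne_zero_of_add_one_le (hmn : m + 1 ≤ n) : n ≠ 0 := by
  rintro rfl
  simp at hmn

namespace JointlyContDiff

theorem hasDerivAt_comp (hv : JointlyContDiff n v) (hn : n ≠ 0) {γ : ℝ → ℝ × ℝ × ℝ}
    {e : ℝ × ℝ × ℝ} {s : ℝ} (hγ : HasDerivAt γ e s) :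
    HasDerivAt (fun r => v (γ r).1 (γ r).2.1 (γ r).2.2)
      (dirDeriv e v (γ s).1 (γ s).2.1 (γ s).2.2) s :=
  (ContDiff.differentiable hv hn (γ s)).hasFDerivAt.comp_hasDerivAt s hγ

theorem pt_eq_dirDeriv (hv : JointlyContDiff n v) (hn : n ≠ 0) : pt v = dirDeriv (1, 0, 0) v := by
  funext t x y
  exact (hv.hasDerivAt_comp hn (hasDerivAt_mk_t t x y)).deriv

theorem px_eq_dirDeriv (hv : JointlyContDiff n v) (hn : n ≠ 0) : px v = dirDeriv (0, 1, 0) v := by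
  funext t x y
  exact (hv.hasDerivAt_comp hn (hasDerivAt_mk_x t x y)).deriv

theorem py_eq_dirDeriv (hv : JointlyContDiff n v) (hn : n ≠ 0) : py v = dirDeriv (0, 0, 1) v := by
  funext t x y
  exact (hv.hasDerivAt_comp hn (hasDerivAt_mk_y t x y)).deriv

theorem hasDerivAt_pt (hv : JointlyContDiff n v) (hn : n ≠ 0) (t x y : ℝ) :
    HasDerivAt (fun s => v s x y) (pt v t x y) t :=
  (hv.hasDerivAt_comp hn (hasDerivAt_mk_t t x y)).differentiableAt.hasDerivAt

theorem hasDerivAt_px (hv : JointlyContDiff n v) (hn : n ≠ 0) (t x y : ℝ) :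
    HasDerivAt (fun s => v t s y) (px v t x y) x :=
  (hv.hasDerivAt_comp hn (hasDerivAt_mk_x t x y)).differentiableAt.hasDerivAt

theorem hasDerivAt_py (hv : JointlyContDiff n v) (hn : n ≠ 0) (t x y : ℝ) :
    HasDerivAt (fun s => v t x s) (py v t x y) y :=
  (hv.hasDerivAt_comp hn (hasDerivAt_mk_y t x y)).differentiableAt.hasDerivAt

theorem dirDeriv_of_le (hv : JointlyContDiff n v) (hmn : m + 1 ≤ n) (e : ℝ × ℝ × ℝ) :
    JointlyContDiff m (dirDeriv e v) :=
  (ContDiff.fderiv_right hv hmn).clm_apply contDiff_const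

theorem pt_of_le (hv : JointlyContDiff n v) (hmn : m + 1 ≤ n) : JointlyContDiff m (pt v) :=
  hv.pt_eq_dirDeriv (ne_zero_of_add_one_le hmn) ▸ hv.dirDeriv_of_le hmn _

theorem px_of_le (hv : JointlyContDiff n v) (hmn : m + 1 ≤ n) : JointlyContDiff m (px v) :=
  hv.px_eq_dirDeriv (ne_zero_of_add_one_le hmn) ▸ hv.dirDeriv_of_le hmn _

theorem py_of_le (hv : JointlyContDiff n v) (hmn : m + 1 ≤ n) : JointlyContDiff m (py v) :=
  hv.py_eq_dirDeriv (ne_zero_of_add_one_le hmn) ▸ hv.dirDeriv_of_le hmn _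

theorem iterate_px {k : ℕ} (hv : JointlyContDiff (m + k) v) : JointlyContDiff m (px^[k] v) := by
  induction k generalizing v with
  | zero => simpa using hv
  | succ k ih =>
    rw [Function.iterate_succ_apply]
    exact ih (hv.px_of_le (by push_cast; rw [add_assoc]))

theorem hasDerivAt_iterate_px (hv : JointlyContDiff n v) {k : ℕ} (hk : 1 + (k : WithTop ℕ∞) ≤ n)
    (t x y : ℝ) : HasDerivAt (fun s => px^[k] v t s y) (px (px^[k] v) t x y) x :=
  (iterate_px (ContDiff.of_le hv hk)).hasDerivAt_px one_ne_zero t x y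

theorem dirDeriv_comm (hv : JointlyContDiff 2 v) (e e' : ℝ × ℝ × ℝ) :
    dirDeriv e (dirDeriv e' v) = dirDeriv e' (dirDeriv e v) := by
  funext t x y
  have hd : DifferentiableAt ℝ (fderiv ℝ fun q : ℝ × ℝ × ℝ => v q.1 q.2.1 q.2.2) (t, x, y) :=
    (ContDiff.fderiv_right (m := 1) hv (by norm_num)).differentiable one_ne_zero _
  have hsymm : IsSymmSndFDerivAt ℝ (fun q : ℝ × ℝ × ℝ => v q.1 q.2.1 q.2.2) (t, x, y) :=
    (ContDiff.contDiffAt hv).isSymmSndFDerivAt (by simp)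
  simpa [dirDeriv, fderiv_clm_apply hd (differentiableAt_const _)] using hsymm.eq e e'

theorem pt_px_comm (hv : JointlyContDiff 2 v) : pt (px v) = px (pt v) := by
  rw [(hv.px_of_le (m := 1) (by norm_num)).pt_eq_dirDeriv one_ne_zero,
    (hv.pt_of_le (m := 1) (by norm_num)).px_eq_dirDeriv one_ne_zero,
    hv.px_eq_dirDeriv two_ne_zero, hv.pt_eq_dirDeriv two_ne_zero, hv.dirDeriv_comm]

theorem py_px_comm (hv : JointlyContDiff 2 v) : py (px v) = px (py v) := by
  rw [(hv.px_of_le (m := 1) (by norm_num)).py_eq_dirDeriv one_ne_zero,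
    (hv.py_of_le (m := 1) (by norm_num)).px_eq_dirDeriv one_ne_zero,
    hv.px_eq_dirDeriv two_ne_zero, hv.py_eq_dirDeriv two_ne_zero, hv.dirDeriv_comm]

end JointlyContDiff

/-- The `x`-flux `E` of the equation in divergence form, `∂_x E - ∂_y (σ v_y) = 0`. -/
noncomputable def potentialFlux (β : ℝ) (v : ℝ → ℝ → ℝ → ℝ) : ℝ → ℝ → ℝ → ℝ :=
  fun t x y => β * px (px (px v)) t x y + px (px (px (px (px v)))) t x y
    + (1 / 2) * (px v t x y) ^ 2 + pt v t x y

/-- The `x`-flux of the x-momentum balance, whose density is `v_x² / 2` and whose `y`-flux is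
`-σ v_x v_y`. -/
noncomputable def momentumFlux (β σ : ℝ) (v : ℝ → ℝ → ℝ → ℝ) : ℝ → ℝ → ℝ → ℝ :=
  fun t x y => (1 / 2) * σ * (py v t x y) ^ 2 + β * px v t x y * px (px (px v)) t x y
    - (1 / 2) * β * (px (px v) t x y) ^ 2 + (1 / 3) * (px v t x y) ^ 3
    + px (px (px (px (px v)))) t x y * px v t x y
    - px (px v) t x y * px (px (px (px v))) t x y
    + (1 / 2) * (px (px (px v)) t x y) ^ 2

/-- The `x`-flux of the balance obtained by multiplying the equation by `x`. -/
noncomputable def firstMomentFlux (β : ℝ) (v : ℝ → ℝ → ℝ → ℝ) : ℝ → ℝ → ℝ → ℝ :=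
  fun t x y => x * potentialFlux β v t x y - (β * px (px v) t x y + px (px (px (px v))) t x y)

/-- The conserved density `T` of the generalized x-momentum. -/
noncomputable def genMomentumDensity (v : ℝ → ℝ → ℝ → ℝ) (f : ℝ → ℝ) : ℝ → ℝ → ℝ → ℝ :=
  fun t x y => (1 / 2) * (px v t x y) ^ 2 * f t + v t x y * deriv f t

/-- The `x`-flux `Φˣ` of the generalized x-momentum. -/
noncomputable def genMomentumFluxX (β σ : ℝ) (v : ℝ → ℝ → ℝ → ℝ) (f : ℝ → ℝ) :
    ℝ → ℝ → ℝ → ℝ :=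
  fun t x y => momentumFlux β σ v t x y * f t - firstMomentFlux β v t x y * deriv f t
    - (1 / (2 * σ)) * y ^ 2 * potentialFlux β v t x y * deriv (deriv f) t

/-- The `y`-flux `Φʸ` of the generalized x-momentum. -/
noncomputable def genMomentumFluxY (σ : ℝ) (v : ℝ → ℝ → ℝ → ℝ) (f : ℝ → ℝ) :
    ℝ → ℝ → ℝ → ℝ :=
  fun t x y => -σ * f t * px v t x y * py v t x y + σ * x * deriv f t * py v t x y
    + ((1 / 2) * y ^ 2 * py v t x y - y * v t x y) * deriv (deriv f) t

/-- The characteristic (multiplier) `Q` of the generalized x-momentum conservation law. -/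
noncomputable def genMomentumCharacteristic (σ : ℝ) (v : ℝ → ℝ → ℝ → ℝ) (f : ℝ → ℝ) :
    ℝ → ℝ → ℝ → ℝ :=
  fun t x y => px v t x y * f t - x * deriv f t - (1 / (2 * σ)) * y ^ 2 * deriv (deriv f) t

theorem hasDerivAt_potentialFlux (hv : JointlyContDiff 6 v) (t x y : ℝ) :
    HasDerivAt (fun s => potentialFlux β v t s y)
      (KKP β σ v t x y + σ * py (py v) t x y) x := by
  have h₁ := hv.hasDerivAt_iterate_px (k := 1) (by norm_num) t x y
  have h₃ := hv.hasDerivAt_iterate_px (k := 3) (by norm_num) t x y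
  have h₅ := hv.hasDerivAt_iterate_px (k := 5) (by norm_num) t x y
  have ht := (hv.pt_of_le (m := 5) (by norm_num)).hasDerivAt_px (by norm_num) t x y
  refine ((((h₃.const_mul β).fun_add h₅).fun_add
    ((h₁.fun_pow 2).const_mul (1 / 2))).fun_add ht).congr_deriv ?_
  simp only [KKP, Function.iterate_succ_apply, Function.iterate_zero_apply]
  ring

theorem hasDerivAt_momentumFlux (hv : JointlyContDiff 6 v) (t x y : ℝ) :
    HasDerivAt (fun s => momentumFlux β σ v t s y)
      (px v t x y * (KKP β σ v t x y + σ * py (py v) t x y - px (pt v) t x y)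
        + σ * py v t x y * px (py v) t x y) x := by
  have h₁ := hv.hasDerivAt_iterate_px (k := 1) (by norm_num) t x y
  have h₂ := hv.hasDerivAt_iterate_px (k := 2) (by norm_num) t x y
  have h₃ := hv.hasDerivAt_iterate_px (k := 3) (by norm_num) t x y
  have h₄ := hv.hasDerivAt_iterate_px (k := 4) (by norm_num) t x y
  have h₅ := hv.hasDerivAt_iterate_px (k := 5) (by norm_num) t x y
  have hy := (hv.py_of_le (m := 5) (by norm_num)).hasDerivAt_px (by norm_num) t x y
  refine ((((((((hy.fun_pow 2).const_mul (1 / 2 * σ)).fun_add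
    ((h₁.const_mul β).fun_mul h₃)).fun_sub ((h₂.fun_pow 2).const_mul (1 / 2 * β))).fun_add
    ((h₁.fun_pow 3).const_mul (1 / 3))).fun_add (h₅.fun_mul h₁)).fun_sub
    (h₂.fun_mul h₄)).fun_add ((h₃.fun_pow 2).const_mul (1 / 2))).congr_deriv ?_
  simp only [KKP, Function.iterate_succ_apply, Function.iterate_zero_apply]
  ring

theorem hasDerivAt_firstMomentFlux (hv : JointlyContDiff 6 v) (t x y : ℝ) :
    HasDerivAt (fun s => firstMomentFlux β v t s y)
      ((1 / 2) * (px v t x y) ^ 2 + pt v t x y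
        + x * (KKP β σ v t x y + σ * py (py v) t x y)) x := by
  have h₂ := hv.hasDerivAt_iterate_px (k := 2) (by norm_num) t x y
  have h₄ := hv.hasDerivAt_iterate_px (k := 4) (by norm_num) t x y
  refine (((hasDerivAt_id' x).fun_mul (hasDerivAt_potentialFlux (σ := σ) hv t x y)).fun_sub
    ((h₂.const_mul β).fun_add h₄)).congr_deriv ?_
  simp only [potentialFlux, Function.iterate_succ_apply, Function.iterate_zero_apply]
  ring

theorem pt_genMomentumDensity (hv : JointlyContDiff 2 v) (hf : Differentiable ℝ f)
    (hf' : Differentiable ℝ (deriv f)) (t x y : ℝ) :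
    pt (genMomentumDensity v f) t x y =
      px v t x y * px (pt v) t x y * f t
        + ((1 / 2) * (px v t x y) ^ 2 + pt v t x y) * deriv f t
        + v t x y * deriv (deriv f) t := by
  have hvt := hv.hasDerivAt_pt two_ne_zero t x y
  have hvxt := (hv.px_of_le (m := 1) (by norm_num)).hasDerivAt_pt one_ne_zero t x y
  rw [hv.pt_px_comm] at hvxt
  refine ((((hvxt.fun_pow 2).const_mul (1 / 2)).fun_mul (hf t).hasDerivAt).fun_add
    (hvt.fun_mul (hf' t).hasDerivAt)).deriv.trans ?_
  ring

theorem px_genMomentumFluxX (hv : JointlyContDiff 6 v) (t x y : ℝ) :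
    px (genMomentumFluxX β σ v f) t x y =
      (px v t x y * (KKP β σ v t x y + σ * py (py v) t x y - px (pt v) t x y)
          + σ * py v t x y * px (py v) t x y) * f t
        - ((1 / 2) * (px v t x y) ^ 2 + pt v t x y
          + x * (KKP β σ v t x y + σ * py (py v) t x y)) * deriv f t
        - (1 / (2 * σ)) * y ^ 2 * (KKP β σ v t x y + σ * py (py v) t x y)
          * deriv (deriv f) t :=
  ((((hasDerivAt_momentumFlux hv t x y).mul_const (f t)).fun_sub
    ((hasDerivAt_firstMomentFlux hv t x y).mul_const (deriv f t))).fun_sub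
    (((hasDerivAt_potentialFlux hv t x y).const_mul (1 / (2 * σ) * y ^ 2)).mul_const
      (deriv (deriv f) t))).deriv

theorem py_genMomentumFluxY (hv : JointlyContDiff 2 v) (t x y : ℝ) :
    py (genMomentumFluxY σ v f) t x y =
      -σ * f t * (px (py v) t x y * py v t x y + px v t x y * py (py v) t x y)
        + σ * x * deriv f t * py (py v) t x y
        + ((1 / 2) * y ^ 2 * py (py v) t x y - v t x y) * deriv (deriv f) t := by
  have hvy := hv.hasDerivAt_py two_ne_zero t x y
  have hvyy := (hv.py_of_le (m := 1) (by norm_num)).hasDerivAt_py one_ne_zero t x y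
  have hvxy := (hv.px_of_le (m := 1) (by norm_num)).hasDerivAt_py one_ne_zero t x y
  rw [hv.py_px_comm] at hvxy
  have hy := hasDerivAt_id' y
  refine ((((hvxy.const_mul (-σ * f t)).fun_mul hvyy).fun_add
    (hvyy.const_mul (σ * x * deriv f t))).fun_add
    (((((hy.fun_pow 2).const_mul (1 / 2)).fun_mul hvyy).fun_sub (hy.fun_mul hvy)).mul_const
      (deriv (deriv f) t))).deriv.trans ?_
  ring

theorem gen_x_momentum_conservation_KKP_general (hσ : σ ≠ 0) (hv : JointlyContDiff 6 v)
    (hf : Differentiable ℝ f) (hf' : Differentiable ℝ (deriv f)) (t x y : ℝ) :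
    pt (genMomentumDensity v f) t x y + px (genMomentumFluxX β σ v f) t x y
        + py (genMomentumFluxY σ v f) t x y =
      genMomentumCharacteristic σ v f t x y * KKP β σ v t x y := by
  have hv₂ : JointlyContDiff 2 v := ContDiff.of_le hv (by norm_num)
  rw [pt_genMomentumDensity hv₂ hf hf', px_genMomentumFluxX hv, py_genMomentumFluxY hv₂,
    genMomentumCharacteristic]
  field_simp
  ring

end

/-- Generalized x-momentum conservation law for the potential Kawahara–KP equation. -/
theorem gen_x_momentum_conservation_KKP (β σ : ℝ) (hβ : β ≠ 0) (hσ : σ = 1 ∨ σ = -1)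
    (v : ℝ → ℝ → ℝ → ℝ)
    (hv : ContDiff ℝ (⊤ : ℕ∞) (fun q : ℝ × ℝ × ℝ => v q.1 q.2.1 q.2.2))
    (hsol : ∀ t x y : ℝ, KKP β σ v t x y = 0)
    (f : ℝ → ℝ) (hf : ContDiff ℝ (⊤ : ℕ∞) f)
    (T Φx Φy : ℝ → ℝ → ℝ → ℝ)
    (hT : T = fun t x y => (1 / 2) * (px v t x y) ^ 2 * f t + v t x y * deriv f t)
    (hΦx : Φx = fun t x y =>
      ((1 / 2) * σ * (py v t x y) ^ 2 + β * px v t x y * px (px (px v)) t x y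
          - (1 / 2) * β * (px (px v) t x y) ^ 2 + (1 / 3) * (px v t x y) ^ 3
          + px (px (px (px (px v)))) t x y * px v t x y
          - px (px v) t x y * px (px (px (px v))) t x y
          + (1 / 2) * (px (px (px v)) t x y) ^ 2) * f t
        - (x * (β * px (px (px v)) t x y + px (px (px (px (px v)))) t x y
              + (1 / 2) * (px v t x y) ^ 2 + pt v t x y)
            - (β * px (px v) t x y + px (px (px (px v))) t x y)) * deriv f t
        - (1 / (2 * σ)) * y ^ 2 * (β * px (px (px v)) t x y
            + px (px (px (px (px v)))) t x y + (1 / 2) * (px v t x y) ^ 2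
            + pt v t x y) * deriv (deriv f) t)
    (hΦy : Φy = fun t x y =>
      - σ * f t * px v t x y * py v t x y + σ * x * deriv f t * py v t x y
        + ((1 / 2) * y ^ 2 * py v t x y - y * v t x y) * deriv (deriv f) t) :
    ∀ t x y : ℝ, pt T t x y + px Φx t x y + py Φy t x y = 0 := by
  subst hT hΦx hΦy
  have hσ₀ : σ ≠ 0 := by rcases hσ with rfl | rfl <;> norm_num
  have hv₆ : JointlyContDiff 6 v := mod_cast contDiff_infty.1 hv 6
  have hf' : ContDiff ℝ (⊤ : ℕ∞) (deriv f) := (contDiff_infty_iff_deriv.1 hf).2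
  intro t x y
  have identity := gen_x_momentum_conservation_KKP_general (β := β) hσ₀ hv₆
    (hf.differentiable (by simp)) (hf'.differentiable (by simp)) t x y
  rw [hsol, mul_zero] at identity
  exact identity
end

section
/- Existence of sech-type line solitons (Proposition on solitary line waves): let β < 0, σ ∈ {1, -1}, and μ, ν be real constants; set r := √(-β/13), κ := σ·μ² + ν, p := κ + 36·r⁴, and q := 105·r⁴. Then the function U(ξ) := p - q·sech((1/2)·r·ξ)⁴ satisfies the line-wave ODE U·U' - κ·U' + β·U''' + U⁽⁵⁾ = 0 on all of ℝ. -/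
/-- The line-wave ODE `U·U' - κ·U' + β·U''' + U⁽⁵⁾ = 0` on all of `ℝ`. -/
def LineWaveODE (β κ : ℝ) (U : ℝ → ℝ) : Prop :=
  ∀ ξ : ℝ,
    U ξ * deriv U ξ - κ * deriv U ξ + β * deriv^[3] U ξ + deriv^[5] U ξ = 0

/-!
The left-hand side of the ODE is the derivative of `U² / 2 - κ U + β U'' + U⁽⁴⁾`, so it suffices
that this first integral is constant. Only even derivatives occur in it, and
`(sechⁿ)'' = n² sechⁿ - n (n + 1) sechⁿ⁺²`; hence for `U = p - q sech⁴ (a ξ)` the first integral is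
a polynomial in `sech (a ξ)` with only the powers `0, 4, 6, 8`. The sixth power cancels when
`β = -52 a²`, the eighth when `q = 1680 a⁴`, and the fourth then forces `p = κ + 576 a⁴`.
With `r = 2 a` these are the relations between the parameters of the soliton.
-/

section FirstIntegral

/-- The once-integrated form `U² / 2 - κ U + β U'' + U⁽⁴⁾` of the line-wave ODE, which is constant
along sufficiently smooth solutions. -/
noncomputable def lineWaveFirstIntegral (β κ : ℝ) (U : ℝ → ℝ) (ξ : ℝ) : ℝ :=
  U ξ ^ 2 / 2 - κ * U ξ + β * iteratedDeriv 2 U ξ + iteratedDeriv 4 U ξ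

variable {U : ℝ → ℝ}

theorem hasDerivAt_lineWaveFirstIntegral (β κ : ℝ) (hU : ContDiff ℝ 5 U) (ξ : ℝ) :
    HasDerivAt (lineWaveFirstIntegral β κ U)
      (U ξ * deriv U ξ - κ * deriv U ξ + β * deriv^[3] U ξ + deriv^[5] U ξ) ξ := by
  have hderiv (m : ℕ) (hm : m < 5) :
      HasDerivAt (iteratedDeriv m U) (deriv^[m + 1] U ξ) ξ := by
    rw [← iteratedDeriv_eq_iterate, iteratedDeriv_succ]
    exact (hU.differentiable_iteratedDeriv m (mod_cast hm) ξ).hasDerivAt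
  have hU₁ : HasDerivAt U (deriv U ξ) ξ := by simpa using hderiv 0 (by norm_num)
  refine (((((hU₁.fun_pow 2).div_const 2).fun_sub (hU₁.const_mul κ)).fun_add
    ((hderiv 2 (by norm_num)).const_mul β)).fun_add (hderiv 4 (by norm_num))).congr_deriv ?_
  ring

theorem lineWaveODE_iff_exists_lineWaveFirstIntegral_eq {β κ : ℝ} (hU : ContDiff ℝ 5 U) :
    LineWaveODE β κ U ↔ ∃ c, ∀ ξ, lineWaveFirstIntegral β κ U ξ = c := by
  have hderiv := hasDerivAt_lineWaveFirstIntegral β κ hU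
  constructor
  · intro hODE
    exact ⟨_, fun ξ ↦ is_const_of_deriv_eq_zero (fun x ↦ (hderiv x).differentiableAt)
      (fun x ↦ (hderiv x).deriv.trans (hODE x)) ξ 0⟩
  · rintro ⟨c, hc⟩ ξ
    have hconst : lineWaveFirstIntegral β κ U = fun _ ↦ c := funext hc
    exact (hderiv ξ).unique (hconst ▸ hasDerivAt_const ξ c)

end FirstIntegral

section Sech

/-- The hyperbolic secant, written `1 / cosh` rather than `cosh⁻¹` so that it unfolds to the soliton
profile as it is usually displayed. -/
noncomputable def sech (x : ℝ) : ℝ := 1 / Real.cosh x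

theorem sech_mul_cosh (x : ℝ) : sech x * Real.cosh x = 1 :=
  one_div_mul_cancel (Real.cosh_pos x).ne'

theorem sech_sq_mul_sinh_sq (x : ℝ) : sech x ^ 2 * Real.sinh x ^ 2 = 1 - sech x ^ 2 := by
  rw [Real.sinh_sq, mul_sub, ← mul_pow, sech_mul_cosh, one_pow, mul_one]

@[fun_prop]
theorem contDiff_sech {n : WithTop ℕ∞} : ContDiff ℝ n sech :=
  contDiff_const.div Real.contDiff_cosh fun x ↦ (Real.cosh_pos x).ne'

theorem hasDerivAt_sech (x : ℝ) : HasDerivAt sech (-(sech x ^ 2 * Real.sinh x)) x := by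
  refine ((hasDerivAt_const x 1).fun_div (Real.hasDerivAt_cosh x)
    (Real.cosh_pos x).ne').congr_deriv ?_
  simp only [sech]
  ring

theorem hasDerivAt_sech_pow (n : ℕ) (x : ℝ) :
    HasDerivAt (fun x ↦ sech x ^ n) (-n * (sech x ^ (n + 1) * Real.sinh x)) x := by
  refine ((hasDerivAt_sech x).fun_pow n).congr_deriv ?_
  cases n with
  | zero => simp
  | succ n => rw [Nat.add_sub_cancel]; ring

theorem hasDerivAt_sech_pow_succ_mul_sinh (n : ℕ) (x : ℝ) :
    HasDerivAt (fun x ↦ sech x ^ (n + 1) * Real.sinh x)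
      (-n * sech x ^ n + (n + 1) * sech x ^ (n + 2)) x := by
  refine ((hasDerivAt_sech_pow (n + 1) x).fun_mul (Real.hasDerivAt_sinh x)).congr_deriv ?_
  push_cast
  linear_combination (-(n + 1) * sech x ^ n) * sech_sq_mul_sinh_sq x
    + sech x ^ n * sech_mul_cosh x

theorem iteratedDeriv_two_sech_pow (n : ℕ) :
    iteratedDeriv 2 (fun x ↦ sech x ^ n) =
      fun x ↦ n ^ 2 * sech x ^ n - n * (n + 1) * sech x ^ (n + 2) := by
  have hderiv : deriv (fun x ↦ sech x ^ n) = fun x ↦ -n * (sech x ^ (n + 1) * Real.sinh x) :=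
    funext fun x ↦ (hasDerivAt_sech_pow n x).deriv
  funext x
  rw [iteratedDeriv_succ, iteratedDeriv_one, hderiv,
    ((hasDerivAt_sech_pow_succ_mul_sinh n x).const_mul (-n : ℝ)).deriv]
  ring

theorem iteratedDeriv_four_sech_pow (n : ℕ) :
    iteratedDeriv 4 (fun x ↦ sech x ^ n) = fun x ↦
      n ^ 4 * sech x ^ n - n * (n + 1) * (n ^ 2 + (n + 2) ^ 2) * sech x ^ (n + 2)
        + n * (n + 1) * (n + 2) * (n + 3) * sech x ^ (n + 4) := by
  have hiterate : iteratedDeriv 4 (fun x ↦ sech x ^ n) =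
      iteratedDeriv 2 (iteratedDeriv 2 fun x ↦ sech x ^ n) := by
    simp only [iteratedDeriv_eq_iterate, ← Function.iterate_add_apply]
  funext x
  rw [hiterate, iteratedDeriv_two_sech_pow,
    iteratedDeriv_fun_sub (by fun_prop) (by fun_prop), iteratedDeriv_const_mul_field,
    iteratedDeriv_const_mul_field, iteratedDeriv_two_sech_pow, iteratedDeriv_two_sech_pow]
  push_cast
  ring

end Sech

theorem iteratedDeriv_const_sub_const_mul_comp_const_mul {𝕜 : Type*} [NontriviallyNormedField 𝕜]
    {n : ℕ} (hn : 0 < n) {f : 𝕜 → 𝕜} (hf : ContDiff 𝕜 n f) (p q a x : 𝕜) :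
    iteratedDeriv n (fun x ↦ p - q * f (a * x)) x =
      -(q * (a ^ n * iteratedDeriv n f (a * x))) := by
  rw [iteratedDeriv_const_sub hn, iteratedDeriv_neg, iteratedDeriv_const_mul_field,
    iteratedDeriv_comp_const_mul hf]

theorem lineWaveFirstIntegral_sech_pow_four (β κ p q a ξ : ℝ) :
    lineWaveFirstIntegral β κ (fun ξ ↦ p - q * sech (a * ξ) ^ 4) ξ =
      (p ^ 2 / 2 - κ * p) - q * (p - κ + 16 * β * a ^ 2 + 256 * a ^ 4) * sech (a * ξ) ^ 4
        + 20 * q * a ^ 2 * (β + 52 * a ^ 2) * sech (a * ξ) ^ 6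
        + q / 2 * (q - 1680 * a ^ 4) * sech (a * ξ) ^ 8 := by
  have hderiv {n : ℕ} (hn : 0 < n) :=
    iteratedDeriv_const_sub_const_mul_comp_const_mul hn (f := fun x ↦ sech x ^ 4)
      (by fun_prop) p q a ξ
  rw [lineWaveFirstIntegral, hderiv two_pos, hderiv four_pos, iteratedDeriv_two_sech_pow,
    iteratedDeriv_four_sech_pow]
  push_cast
  ring

/-- Existence of sech-type line solitons for the Kawahara–KP equation. -/
theorem sech_line_soliton_exists (β σ μ ν : ℝ) (hβ : β < 0) (hσ : σ = 1 ∨ σ = -1)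
    (r κ p q : ℝ) (hr : r = Real.sqrt (-β / 13)) (hκ : κ = σ * μ ^ 2 + ν)
    (hp : p = κ + 36 * r ^ 4) (hq : q = 105 * r ^ 4) :
    LineWaveODE β κ (fun ξ => p - q * (1 / Real.cosh ((1 / 2) * r * ξ)) ^ 4) := by
  have hβr : β = -13 * r ^ 2 := by
    rw [hr, Real.sq_sqrt (by linarith)]
    ring
  change LineWaveODE β κ (fun ξ ↦ p - q * sech ((1 / 2) * r * ξ) ^ 4)
  rw [lineWaveODE_iff_exists_lineWaveFirstIntegral_eq (by fun_prop)]
  refine ⟨p ^ 2 / 2 - κ * p, fun ξ ↦ ?_⟩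
  rw [lineWaveFirstIntegral_sech_pow_four, hβr, hp, hq]
  ring
end

section
/- Uniqueness of sech-type line solitons within the sech ansatz: let β ≠ 0, κ ∈ ℝ, m > 0, and a₀, a₁, a₂ ∈ ℝ with (a₁, a₂) ≠ (0, 0). If the function U(ξ) := a₀ + a₁·sech(m·ξ)² + a₂·sech(m·ξ)⁴ satisfies the line-wave ODE U·U' - κ·U' + β·U''' + U⁽⁵⁾ = 0 on all of ℝ, then necessarily a₁ = 0, β = -52·m² (in particular β < 0), a₂ = -1680·m⁴, and a₀ = κ + 576·m⁴. -/
/-!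
The ODE is an exact derivative, so `U² / 2 - κ U + β U'' + U⁗` is constant along a solution. If `U`
is a polynomial in `σ = sech² (m ξ)`, then so is `U''`, because `σ'² = 4 m² σ² (1 - σ)` and
`σ'' = 4 m² σ - 6 m² σ²`. Since `σ` takes infinitely many values, the first integral is a constant
polynomial in `σ`; for `U = a₀ + a₁ σ + a₂ σ²` its four nonconstant coefficients vanish. The top
two give `a₂` and express `a₁` through `β`, after which the other two exclude `a₁ ≠ 0` by a sum of
squares.
-/

open Polynomial Real

theorem LineWaveODE.exists_firstIntegral {β κ : ℝ} {U : ℝ → ℝ} (hU : ContDiff ℝ 5 U)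
    (h : LineWaveODE β κ U) :
    ∃ c, ∀ ξ, U ξ ^ 2 / 2 - κ * U ξ + β * deriv^[2] U ξ + deriv^[4] U ξ = c := by
  have hasDerivAt_iterate (k : ℕ) (hk : k ≤ 4) (ξ : ℝ) :
      HasDerivAt (deriv^[k] U) (deriv^[k + 1] U ξ) ξ := by
    have hdiff : Differentiable ℝ (deriv^[k] U) :=
      ((hU.of_le (by norm_cast; lia)).iterate_deriv' 1 k).differentiable one_ne_zero
    simpa only [Function.iterate_succ_apply'] using (hdiff ξ).hasDerivAt
  have hasDerivAt_zero (ξ : ℝ) : HasDerivAt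
      (fun ξ => U ξ ^ 2 / 2 - κ * U ξ + β * deriv^[2] U ξ + deriv^[4] U ξ) 0 ξ := by
    have h₀ : HasDerivAt U (deriv U ξ) ξ := hasDerivAt_iterate 0 (by simp) ξ
    have h₂ := hasDerivAt_iterate 2 (by simp) ξ
    have h₄ := hasDerivAt_iterate 4 le_rfl ξ
    refine (((((h₀.pow 2).div_const 2).sub (h₀.const_mul κ)).add (h₂.const_mul β)).add
      h₄).congr_deriv ?_
    linear_combination h ξ
  exact ⟨_, fun ξ => is_const_of_deriv_eq_zero (fun ξ => (hasDerivAt_zero ξ).differentiableAt)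
    (fun ξ => (hasDerivAt_zero ξ).deriv) ξ 0⟩

/-- The profile `ξ ↦ sech² (m ξ)`, in which the soliton ansatz is a polynomial. -/
noncomputable def sechSq (m ξ : ℝ) : ℝ := (1 / cosh (m * ξ)) ^ 2

section SechSq

variable (m ξ : ℝ)

theorem tanh_sq_eq_one_sub_sechSq : tanh (m * ξ) ^ 2 = 1 - sechSq m ξ := by
  have hcosh := (cosh_pos (m * ξ)).ne'
  rw [sechSq, tanh_eq_sinh_div_cosh]
  field_simp
  linear_combination -cosh_sq (m * ξ)

theorem hasDerivAt_tanh_const_mul :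
    HasDerivAt (fun ξ => tanh (m * ξ)) (m * sechSq m ξ) ξ := by
  have hcosh := (cosh_pos (m * ξ)).ne'
  have hlin : HasDerivAt (fun ξ => m * ξ) m ξ := hasDerivAt_const_mul m
  simp only [tanh_eq_sinh_div_cosh]
  refine (hlin.sinh.div hlin.cosh hcosh).congr_deriv ?_
  rw [sechSq]
  field_simp
  linear_combination m * cosh_sq (m * ξ)

theorem hasDerivAt_sechSq :
    HasDerivAt (sechSq m) (-2 * m * tanh (m * ξ) * sechSq m ξ) ξ := by
  have hσ : sechSq m = fun ξ => 1 - tanh (m * ξ) ^ 2 := by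
    funext ξ
    rw [tanh_sq_eq_one_sub_sechSq, sub_sub_cancel]
  rw [hσ]
  refine (((hasDerivAt_tanh_const_mul m ξ).pow 2).const_sub 1).congr_deriv ?_
  rw [← hσ]
  ring

theorem contDiff_sechSq {n : WithTop ℕ∞} : ContDiff ℝ n (sechSq m) := by
  have hcosh (ξ : ℝ) : cosh (m * ξ) ≠ 0 := (cosh_pos _).ne'
  unfold sechSq
  fun_prop (disch := assumption)

variable {m} in
theorem infinite_range_sechSq (hm : m ≠ 0) : (Set.range (sechSq m)).Infinite := by
  have hσ₀ : sechSq m 0 = 1 := by simp [sechSq]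
  have hσ₁ : sechSq m 1 ≠ 1 := by
    have hlt : 1 < cosh (m * 1) := one_lt_cosh.2 (by simpa)
    exact (pow_lt_one₀ (by positivity) ((div_lt_one (by positivity)).2 hlt) two_ne_zero).ne
  refine (isPreconnected_range (contDiff_sechSq m (n := 0)).continuous).infinite_of_nontrivial
    ⟨_, ⟨1, rfl⟩, _, ⟨0, rfl⟩, ?_⟩
  rwa [hσ₀]

end SechSq

/-- The action of `d²/dξ²` on polynomials in `σ = sech² (m ξ)`, read off from
`p(σ)'' = p''(σ) σ'² + p'(σ) σ''`. -/
noncomputable def sechSqDeriv₂ (m : ℝ) (p : ℝ[X]) : ℝ[X] :=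
  C (4 * m ^ 2) * (X ^ 2 * (1 - X)) * derivative (derivative p)
    + C (2 * m ^ 2) * (2 * X - 3 * X ^ 2) * derivative p

section SechSqDeriv₂

variable (m : ℝ) (p : ℝ[X])

theorem iterate_deriv_two_eval_sechSq :
    deriv^[2] (fun ξ => p.eval (sechSq m ξ)) = fun ξ => (sechSqDeriv₂ m p).eval (sechSq m ξ) := by
  have hasDerivAt_eval (q : ℝ[X]) (ξ : ℝ) : HasDerivAt (fun ξ => q.eval (sechSq m ξ))
      (q.derivative.eval (sechSq m ξ) * (-2 * m * tanh (m * ξ) * sechSq m ξ)) ξ :=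
    (q.hasDerivAt _).comp ξ (hasDerivAt_sechSq m ξ)
  have deriv_eval := funext fun ξ => (hasDerivAt_eval p ξ).deriv
  rw [Function.iterate_succ_apply, Function.iterate_one, deriv_eval]
  funext ξ
  have hσ' := ((hasDerivAt_tanh_const_mul m ξ).const_mul (-2 * m)).mul (hasDerivAt_sechSq m ξ)
  refine (((hasDerivAt_eval (derivative p) ξ).mul hσ').congr_deriv ?_).deriv
  simp only [sechSqDeriv₂, eval_add, eval_sub, eval_mul, eval_pow, eval_C, eval_X, eval_one,
    eval_ofNat, Pi.mul_apply]
  linear_combination (4 * m ^ 2 * sechSq m ξ ^ 2 * p.derivative.derivative.eval (sechSq m ξ)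
    + 4 * m ^ 2 * sechSq m ξ * p.derivative.eval (sechSq m ξ)) * tanh_sq_eq_one_sub_sechSq m ξ

theorem coeff_sechSqDeriv₂_succ (k : ℕ) :
    (sechSqDeriv₂ m p).coeff (k + 1) =
      4 * m ^ 2 * (k + 1) ^ 2 * p.coeff (k + 1) - 2 * m ^ 2 * k * (2 * k + 1) * p.coeff k := by
  have expand : sechSqDeriv₂ m p =
      C (4 * m ^ 2) * (X ^ 2 * derivative (derivative p))
        - C (4 * m ^ 2) * (X ^ 3 * derivative (derivative p))
        + C (4 * m ^ 2) * (X * derivative p) - C (6 * m ^ 2) * (X ^ 2 * derivative p) := by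
    simp only [sechSqDeriv₂, C_mul, map_ofNat]
    ring
  rw [expand]
  simp only [coeff_add, coeff_sub, coeff_C_mul, coeff_X_mul, coeff_X_pow_mul', coeff_derivative]
  rcases k with _ | _ | k <;> simp <;> ring

end SechSqDeriv₂

section PolynomialAnsatz

variable {β κ m : ℝ} {p : ℝ[X]}

theorem LineWaveODE.exists_firstIntegral_eq_C (hm : m ≠ 0)
    (h : LineWaveODE β κ fun ξ => p.eval (sechSq m ξ)) :
    ∃ c, C (1 / 2) * p ^ 2 - C κ * p + C β * sechSqDeriv₂ m p
      + sechSqDeriv₂ m (sechSqDeriv₂ m p) = C c := by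
  have hU : ContDiff ℝ 5 fun ξ => p.eval (sechSq m ξ) := by
    simpa only [coe_aeval_eq_eval, Function.comp_def] using
      (p.contDiff_aeval (𝕜 := ℝ) 5).comp (contDiff_sechSq m)
  obtain ⟨c, hc⟩ := h.exists_firstIntegral hU
  refine ⟨c, eq_of_infinite_eval_eq _ _ ((infinite_range_sechSq hm).mono ?_)⟩
  rintro _ ⟨ξ, rfl⟩
  have hξ := hc ξ
  rw [Function.iterate_add_apply deriv 2 2, iterate_deriv_two_eval_sechSq,
    iterate_deriv_two_eval_sechSq] at hξ
  simp only [Set.mem_ofPred_eq, eval_add, eval_sub, eval_mul, eval_pow, eval_C]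
  linear_combination hξ

theorem LineWaveODE.coeff_succ_eq_zero (hm : m ≠ 0)
    (h : LineWaveODE β κ fun ξ => p.eval (sechSq m ξ)) (k : ℕ) :
    1 / 2 * (p ^ 2).coeff (k + 1) - κ * p.coeff (k + 1) + β * (sechSqDeriv₂ m p).coeff (k + 1)
      + (sechSqDeriv₂ m (sechSqDeriv₂ m p)).coeff (k + 1) = 0 := by
  obtain ⟨c, hc⟩ := h.exists_firstIntegral_eq_C hm
  simpa only [coeff_add, coeff_sub, coeff_C_mul, coeff_C_succ] using congrArg (coeff · (k + 1)) hc

end PolynomialAnsatz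

/-- The algebraic system for the coefficients of `a₀ + a₁ σ + a₂ σ²`, `σ = sech² (m ξ)`, expressing
that it solves the line-wave ODE; `coeff_k` is the coefficient of `σᵏ` in the first integral. -/
structure SechSolitonSystem (β κ m a₀ a₁ a₂ : ℝ) : Prop where
  coeff_one : (a₀ - κ + 4 * β * m ^ 2 + 16 * m ^ 4) * a₁ = 0
  coeff_two : a₁ ^ 2 / 2 + (a₀ - κ + 16 * β * m ^ 2 + 256 * m ^ 4) * a₂
    - (6 * β * m ^ 2 + 120 * m ^ 4) * a₁ = 0
  coeff_three : a₁ * a₂ - (20 * β * m ^ 2 + 1040 * m ^ 4) * a₂ + 120 * m ^ 4 * a₁ = 0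
  coeff_four : a₂ ^ 2 / 2 + 840 * m ^ 4 * a₂ = 0

section Ansatz

variable {β κ m a₀ a₁ a₂ : ℝ}

theorem LineWaveODE.sechSolitonSystem (hm : m ≠ 0)
    (h : LineWaveODE β κ fun ξ => a₀ + a₁ * sechSq m ξ + a₂ * sechSq m ξ ^ 2) :
    SechSolitonSystem β κ m a₀ a₁ a₂ := by
  set p : ℝ[X] := C a₀ + C a₁ * X + C a₂ * X ^ 2 with hp
  have h_eval : LineWaveODE β κ fun ξ => p.eval (sechSq m ξ) := by simpa [hp] using h
  obtain ⟨hp₀, hp₁, hp₂, hp₃, hp₄⟩ : p.coeff 0 = a₀ ∧ p.coeff 1 = a₁ ∧ p.coeff 2 = a₂ ∧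
      p.coeff 3 = 0 ∧ p.coeff 4 = 0 := by
    simp [hp, coeff_X, coeff_C]
  have coeff_eq := h_eval.coeff_succ_eq_zero hm
  have h₁ := coeff_eq 0
  have h₂ := coeff_eq 1
  have h₃ := coeff_eq 2
  have h₄ := coeff_eq 3
  norm_num [sq p, coeff_mul, Finset.Nat.antidiagonal_succ, coeff_sechSqDeriv₂_succ,
    hp₀, hp₁, hp₂, hp₃, hp₄] at h₁ h₂ h₃ h₄
  constructor
  · linear_combination h₁
  · linear_combination h₂
  · linear_combination h₃
  · linear_combination h₄

namespace SechSolitonSystem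

theorem a₂_eq (h : SechSolitonSystem β κ m a₀ a₁ a₂) (hm : m ≠ 0) (ha : (a₁, a₂) ≠ (0, 0)) :
    a₂ = -1680 * m ^ 4 := by
  have ha₂ : a₂ ≠ 0 := by
    rintro rfl
    have ha₁ : a₁ = 0 := by simpa [hm] using h.coeff_three
    exact ha (by rw [ha₁])
  apply mul_left_cancel₀ ha₂
  linear_combination 2 * h.coeff_four

theorem thirteen_mul_a₁ (h : SechSolitonSystem β κ m a₀ a₁ (-1680 * m ^ 4)) (hm : m ≠ 0) :
    13 * a₁ = 280 * m ^ 2 * (β + 52 * m ^ 2) := by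
  apply mul_left_cancel₀ (pow_ne_zero 4 hm)
  linear_combination -h.coeff_three / 120

theorem a₁_eq_zero (h : SechSolitonSystem β κ m a₀ a₁ (-1680 * m ^ 4)) (hm : m ≠ 0) :
    a₁ = 0 := by
  by_contra ha₁
  have ha₀ : a₀ - κ + 4 * β * m ^ 2 + 16 * m ^ 4 = 0 :=
    (mul_eq_zero.1 h.coeff_one).resolve_right ha₁
  have ha₁_eq : a₁ = 280 / 13 * m ^ 2 * (β + 52 * m ^ 2) := by
    linear_combination h.thirteen_mul_a₁ hm / 13
  have h_zero : m ^ 4 * (31 * (β - 26 * m ^ 2) ^ 2 + 6084 * m ^ 4) = 0 := by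
    have h₂ := h.coeff_two
    rw [ha₁_eq] at h₂
    linear_combination 169 / 560 * h₂ + 507 * m ^ 4 * ha₀
  have h_pos : 0 < m ^ 4 * (31 * (β - 26 * m ^ 2) ^ 2 + 6084 * m ^ 4) := by positivity
  exact h_pos.ne' h_zero

theorem β_eq (h : SechSolitonSystem β κ m a₀ 0 (-1680 * m ^ 4)) (hm : m ≠ 0) :
    β = -52 * m ^ 2 := by
  apply mul_left_cancel₀ (pow_ne_zero 2 hm)
  linear_combination -h.thirteen_mul_a₁ hm / 280

theorem a₀_eq (h : SechSolitonSystem (-52 * m ^ 2) κ m a₀ 0 (-1680 * m ^ 4)) (hm : m ≠ 0) :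
    a₀ = κ + 576 * m ^ 4 := by
  apply mul_left_cancel₀ (pow_ne_zero 4 hm)
  linear_combination -h.coeff_two / 1680

end SechSolitonSystem

end Ansatz

/-- Uniqueness of sech-type line solitons within the sech ansatz. -/
theorem sech_line_soliton_unique (β κ m a₀ a₁ a₂ : ℝ) (hβ : β ≠ 0) (hm : 0 < m)
    (ha : (a₁, a₂) ≠ (0, 0))
    (hODE : LineWaveODE β κ
      (fun ξ => a₀ + a₁ * (1 / Real.cosh (m * ξ)) ^ 2
        + a₂ * (1 / Real.cosh (m * ξ)) ^ 4)) :
    a₁ = 0 ∧ β = -52 * m ^ 2 ∧ a₂ = -1680 * m ^ 4 ∧ a₀ = κ + 576 * m ^ 4 := by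
  have h_profile : LineWaveODE β κ fun ξ => a₀ + a₁ * sechSq m ξ + a₂ * sechSq m ξ ^ 2 := by
    simpa only [sechSq, ← pow_mul] using hODE
  have h := h_profile.sechSolitonSystem hm.ne'
  obtain rfl := h.a₂_eq hm.ne' ha
  obtain rfl := h.a₁_eq_zero hm.ne'
  obtain rfl := h.β_eq hm.ne'
  exact ⟨rfl, rfl, rfl, h.a₀_eq hm.ne'⟩
end
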